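/- arXiv:1702.01694 — 3 statements merged into one kernel-verified Lean document; each statement's English description precedes it below -/
import Mathlib

section
/- Let f₁, f₂ ∈ R[x₁,x₂,x₃,x₄] and let l = Σᵢ lᵢxᵢ, m = Σᵢ mᵢxᵢ, n = Σᵢ nᵢxᵢ be linear forms with coefficients in R. For any three row indices r₁ < r₂ < r₃ in {1,2,3,4}, let Δ ∈ R be the determinant of the 3×3 matrix whose rows are (l_{r_s}, m_{r_s}, n_{r_s}) for s = 1,2,3 (a 3-minor of the 4×3 coefficient matrix of l, m, n). Then both Δ·J(f₁,f₂,l,m) and Δ·J(f₁,f₂,l,n) belong to the ideal of R[x₁,x₂,x₃,x₄] generated by J(f₁,l,m,n) and J(f₂,l,m,n). -/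
open MvPolynomial

/-- Determinant of the 4×4 Jacobian matrix `(∂ⱼpᵢ)` of four polynomials. -/
noncomputable def Jdet {R : Type*} [CommRing R]
    (p : Fin 4 → MvPolynomial (Fin 4) R) : MvPolynomial (Fin 4) R :=
  (Matrix.of fun i j => pderiv j (p i)).det

/-- The linear form `Σᵢ lᵢ xᵢ` with coefficients `l : Fin 4 → R`. -/
noncomputable def linForm {R : Type*} [CommRing R] (l : Fin 4 → R) :
    MvPolynomial (Fin 4) R :=
  ∑ i, C (l i) * X i

/-!
Write `v` for the rows of the Jacobian matrix of `n + 1` polynomials in `n + 2` variables and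
`det (e, v)` for the determinant of `v` with the row `e` put on top. By Cramer's rule,
`det (e, v) • a` is a combination of `e` and the rows of `v` in which `e` has coefficient
`det (a, v)`. The linear map `x ↦ det (x, b, v without v i)` kills every row of `v` other than
`v i` and takes the value `± det (b, v)` at `v i`, so `det (e, v) * det (a, b, v without v i)` lies
in the ideal generated by `det (a, v)` and `det (b, v)`. Finally, every maximal minor of `v` is
`det (e, v)` for a suitable `e`: up to sign a standard basis vector, or `0` for a repeated column.
-/

section Determinant

open Matrix

variable {S M N : Type*} [CommRing S] [AddCommGroup M] [Module S M] [AddCommGroup N] [Module S N]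
  {n : ℕ}

theorem alternatingMap_vecCons_vecCons_removeNth_self (f : M [⋀^Fin (n + 2)]→ₗ[S] N) (b : M)
    (v : Fin (n + 1) → M) (i : Fin (n + 1)) :
    f (vecCons (v i) (vecCons b (i.removeNth v))) = (-1) ^ (i + 1 : ℕ) • f (vecCons b v) := by
  have h : i.succ.insertNth (v i) (vecCons b (i.removeNth v)) = vecCons b v := by
    simp [vecCons]
  rw [← f.neg_one_pow_smul_map_insertNth i.succ, h, Fin.val_succ]

theorem alternatingMap_vecCons_vecCons_removeNth_of_ne (f : M [⋀^Fin (n + 2)]→ₗ[S] N) (b : M)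
    (v : Fin (n + 1) → M) {i j : Fin (n + 1)} (hij : j ≠ i) :
    f (vecCons (v j) (vecCons b (i.removeNth v))) = 0 := by
  obtain ⟨k, rfl⟩ := Fin.exists_succAbove_eq hij
  exact f.map_eq_zero_of_eq _ (i := 0) (j := k.succ.succ) rfl (Fin.succ_ne_zero _).symm

theorem det_smul_eq_sum_det_update_smul {ι : Type*} [Fintype ι] [DecidableEq ι]
    (v : ι → ι → S) (a : ι → S) :
    (of v).det • a = ∑ i, (of (Function.update v i a)).det • v i := by
  have h := mulVec_cramer (of v)ᵀ a
  simp only [det_transpose, mulVec_eq_sum, cramer_transpose_apply, transpose_transpose,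
    op_smul_eq_smul] at h
  exact h.symm

theorem det_vecCons_smul_map_eq_add_sum (φ : (Fin (n + 1) → S) →ₗ[S] N)
    (e a : Fin (n + 1) → S) (v : Fin n → Fin (n + 1) → S) :
    (of (vecCons e v)).det • φ a = (of (vecCons a v)).det • φ e +
      ∑ j, (of (vecCons e (Function.update v j a))).det • φ (v j) := by
  rw [← map_smul, det_smul_eq_sum_det_update_smul, map_sum, Fin.sum_univ_succ]
  simp only [map_smul, vecCons, Fin.update_cons_zero, Fin.cons_update, Fin.cons_zero,
    Fin.cons_succ]

theorem det_vecCons_smul_alternatingMap_removeNth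
    (f : (Fin (n + 2) → S) [⋀^Fin (n + 2)]→ₗ[S] N) (e a b : Fin (n + 2) → S)
    (v : Fin (n + 1) → Fin (n + 2) → S) (i : Fin (n + 1)) :
    (of (vecCons e v)).det • f (vecCons a (vecCons b (i.removeNth v))) =
      (of (vecCons a v)).det • f (vecCons e (vecCons b (i.removeNth v))) +
      (of (vecCons e (Function.update v i a))).det • (-1) ^ (i + 1 : ℕ) • f (vecCons b v) := by
  let w : Fin (n + 1) → Fin (n + 2) → S := vecCons b (i.removeNth v)
  let φ : (Fin (n + 2) → S) →ₗ[S] N := f.toMultilinearMap.toLinearMap (vecCons 0 w) 0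
  have hφ (x : Fin (n + 2) → S) : φ x = f (vecCons x w) :=
    congrArg f (Fin.update_cons_zero (α := fun _ => Fin (n + 2) → S) 0 w x)
  have cramer := det_vecCons_smul_map_eq_add_sum φ e a v
  simp only [hφ, w] at cramer
  rw [cramer, Finset.sum_eq_single i, alternatingMap_vecCons_vecCons_removeNth_self]
  · intro j _ hj
    rw [alternatingMap_vecCons_vecCons_removeNth_of_ne f b v hj, smul_zero]
  · simp

theorem det_submatrix_vecCons_single {ι : Type*} [DecidableEq ι] (v : Fin n → ι → S)
    {r : Fin n → ι} {k : ι} (hk : ∀ s, r s ≠ k) :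
    ((of (vecCons (Pi.single k 1) v)).submatrix id (vecCons k r)).det =
      ((of v).submatrix id r).det := by
  set A := (of (vecCons (Pi.single k 1) v)).submatrix id (vecCons k r)
  have row_head : A 0 0 = 1 := Pi.single_eq_same k 1
  have row_tail (s : Fin n) : A 0 s.succ = 0 := Pi.single_eq_of_ne (hk s) 1
  have minor : A.submatrix Fin.succ Fin.succ = (of v).submatrix id r := rfl
  simp [det_succ_row_zero, Fin.sum_univ_succ, row_head, row_tail, minor]

theorem exists_det_vecCons_eq_det_submatrix (v : Fin n → Fin (n + 1) → S)
    (r : Fin n → Fin (n + 1)) :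
    ∃ e : Fin (n + 1) → S, (of (vecCons e v)).det = ((of v).submatrix id r).det := by
  by_cases hr : r.Injective
  · obtain ⟨k, hk⟩ : ∃ k, ∀ s, r s ≠ k := by
      by_contra! h
      simpa using Fintype.card_le_of_surjective r h
    have hσ : (vecCons k r).Bijective :=
      Finite.injective_iff_bijective.1 (Fin.cons_injective_iff.2 ⟨by simpa using hk, hr⟩)
    let σ : Equiv.Perm (Fin (n + 1)) := Equiv.ofBijective _ hσ
    refine ⟨((σ.sign : ℤ) : S) • Pi.single k 1, ?_⟩
    rw [← det_submatrix_vecCons_single v hk]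
    exact (detRowAlternating.toMultilinearMap.cons_smul v _ _).trans (det_permute' σ _).symm
  · obtain ⟨s, t, hst, hne⟩ := Function.not_injective_iff.1 hr
    refine ⟨0, ?_⟩
    rw [det_zero_of_column_eq hne fun _ => by simp [hst]]
    exact det_eq_zero_of_row_eq_zero 0 fun _ => rfl

theorem det_submatrix_mul_det_mem_span (a b : Fin (n + 2) → S)
    (v : Fin (n + 1) → Fin (n + 2) → S) (r : Fin (n + 1) → Fin (n + 2)) (i : Fin (n + 1)) :
    ((of v).submatrix id r).det * (of (vecCons a (vecCons b (i.removeNth v)))).det ∈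
      Ideal.span {(of (vecCons a v)).det, (of (vecCons b v)).det} := by
  set I := Ideal.span {(of (vecCons a v)).det, (of (vecCons b v)).det}
  have ha : (of (vecCons a v)).det ∈ I := Ideal.subset_span (Set.mem_insert _ _)
  have hb : (of (vecCons b v)).det ∈ I := Ideal.subset_span (Set.mem_insert_of_mem _ rfl)
  obtain ⟨e, he⟩ := exists_det_vecCons_eq_det_submatrix v r
  have exchange := det_vecCons_smul_alternatingMap_removeNth detRowAlternating e a b v i
  rw [← he]
  exact Set.mem_of_eq_of_mem (s := I) exchange
    (add_mem (I.mul_mem_right _ ha) (I.mul_mem_left _ (zsmul_mem hb _)))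

end Determinant

section Jacobian

variable {ι σ R : Type*} [CommRing R]

/-- The gradient `(∂ⱼf)ⱼ` of a polynomial, i.e. a row of a Jacobian matrix. -/
noncomputable def polyGradient (f : MvPolynomial σ R) (j : σ) : MvPolynomial σ R :=
  pderiv j f

/-- The Jacobian matrix `(∂ⱼpᵢ)` of a family of polynomials; its rows are the gradients, so that
adding or removing a polynomial adds or removes a row. -/
noncomputable def jacobianMatrix (p : ι → MvPolynomial σ R) : Matrix ι σ (MvPolynomial σ R) :=
  Matrix.of (polyGradient ∘ p)

theorem jacobianMatrix_vecCons {n : ℕ} (f : MvPolynomial σ R) (g : Fin n → MvPolynomial σ R) :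
    jacobianMatrix (Matrix.vecCons f g) =
      Matrix.of (Matrix.vecCons (polyGradient f) (polyGradient ∘ g)) :=
  congrArg Matrix.of (Fin.comp_cons polyGradient f g)

theorem Jdet_eq_det_jacobianMatrix (p : Fin 4 → MvPolynomial (Fin 4) R) :
    Jdet p = (jacobianMatrix p).det :=
  rfl

theorem pderiv_linForm (l : Fin 4 → R) (j : Fin 4) : pderiv j (linForm l) = C (l j) := by
  simp [linForm, pderiv_X, Pi.single_apply]

theorem jacobianMatrix_linForm (a : ι → Fin 4 → R) :
    jacobianMatrix (linForm ∘ a) = (Matrix.of a).map C := by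
  ext1 i j
  exact pderiv_linForm (a i) j

theorem det_submatrix_jacobianMatrix_linForm [Fintype ι] [DecidableEq ι] (a : ι → Fin 4 → R)
    (r : ι → Fin 4) :
    ((jacobianMatrix (linForm ∘ a)).submatrix id r).det =
      C (Matrix.of fun s t => a t (r s)).det := by
  rw [jacobianMatrix_linForm, RingHom.map_det, ← Matrix.det_transpose]
  rfl

end Jacobian

theorem minor_mul_Jdet_mem_span_general {R : Type*} [CommRing R] {k : ℕ}
    (f₁ f₂ : MvPolynomial (Fin (k + 2)) R) (g : Fin (k + 1) → MvPolynomial (Fin (k + 2)) R)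
    (r : Fin (k + 1) → Fin (k + 2)) (i : Fin (k + 1)) :
    ((jacobianMatrix g).submatrix id r).det *
        (jacobianMatrix (Matrix.vecCons f₁ (Matrix.vecCons f₂ (i.removeNth g)))).det ∈
      Ideal.span {(jacobianMatrix (Matrix.vecCons f₁ g)).det,
        (jacobianMatrix (Matrix.vecCons f₂ g)).det} := by
  have rows : polyGradient ∘ Matrix.vecCons f₂ (i.removeNth g) =
      Matrix.vecCons (polyGradient f₂) (i.removeNth (polyGradient ∘ g)) :=
    Fin.comp_cons polyGradient f₂ (i.removeNth g)
  simp only [jacobianMatrix_vecCons, rows]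
  exact det_submatrix_mul_det_mem_span (polyGradient f₁) (polyGradient f₂) (polyGradient ∘ g) r i

/-- **Lemma.** Let `l, m, n` be linear forms, let `r : Fin 3 → Fin 4` be strictly monotone
(selecting three rows `r₁ < r₂ < r₃`), and let `Δ` be the corresponding 3-minor of the 4×3
coefficient matrix of `l, m, n` (rows `(l_{r_s}, m_{r_s}, n_{r_s})`). Then
`Δ·J(f₁,f₂,l,m)` and `Δ·J(f₁,f₂,l,n)` belong to the ideal generated by
`J(f₁,l,m,n)` and `J(f₂,l,m,n)`. -/
theorem minor_mul_Jdet_mem_span {R : Type*} [CommRing R]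
    (f₁ f₂ : MvPolynomial (Fin 4) R) (l m n : Fin 4 → R)
    (r : Fin 3 → Fin 4) (hr : StrictMono r)
    (Δ : R) (hΔ : Δ = (Matrix.of fun s t => ![l, m, n] t (r s)).det) :
    C Δ * Jdet ![f₁, f₂, linForm l, linForm m] ∈
      Ideal.span {Jdet ![f₁, linForm l, linForm m, linForm n],
        Jdet ![f₂, linForm l, linForm m, linForm n]} ∧
    C Δ * Jdet ![f₁, f₂, linForm l, linForm n] ∈
      Ideal.span {Jdet ![f₁, linForm l, linForm m, linForm n],
        Jdet ![f₂, linForm l, linForm m, linForm n]} := by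
  have forms : linForm ∘ ![l, m, n] = ![linForm l, linForm m, linForm n] :=
    List.ofFn_injective rfl
  have omit_n : Fin.removeNth 2 ![linForm l, linForm m, linForm n] = ![linForm l, linForm m] :=
    List.ofFn_injective rfl
  have omit_m : Fin.removeNth 1 ![linForm l, linForm m, linForm n] = ![linForm l, linForm n] :=
    List.ofFn_injective rfl
  have general := minor_mul_Jdet_mem_span_general f₁ f₂ ![linForm l, linForm m, linForm n] r
  simp only [Jdet_eq_det_jacobianMatrix, hΔ, ← det_submatrix_jacobianMatrix_linForm, forms,
    ← omit_n, ← omit_m]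
  exact ⟨general 2, general 1⟩
end

section
/- Write f_i = U_{i,0}·x₄^{d_i} + x₄^{d_i−1}·(U_{i,1}x₁ + U_{i,2}x₂ + U_{i,3}x₃) + h_i (i = 1,2), where U_{i,0},…,U_{i,3} are the coefficient indeterminates of the monomials x₄^{d_i} and x₄^{d_i−1}xⱼ, and h_i collects the remaining terms of f_i. Let 𝕌_{r,s} := U_{1,r}U_{2,s} − U_{1,s}U_{2,r} for 1 ≤ r < s ≤ 3. Then there is a ring isomorphism between C_{x₄}/(J_{1,2}, J_{1,3}, J_{2,3})·C_{x₄} and C_{x₄}/(𝕌_{1,2}, 𝕌_{1,3}, 𝕌_{2,3})·C_{x₄}. -/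
set_option maxSynthPendingDepth 3

open MvPolynomial

/-- Index type for the coefficient indeterminates `U_{i,α}`, `i ∈ {1,2}`,
`α` an exponent vector in four variables with `|α| = d i`. -/
def CoefIdx (d : Fin 2 → ℕ) : Type :=
  Σ i : Fin 2, {α : Fin 4 →₀ ℕ // (α.sum fun _ e => e) = d i}

/-- The universal ring of coefficients `A = k[U_{i,α}]`. -/
abbrev Aring (k : Type*) [CommRing k] (d : Fin 2 → ℕ) : Type _ :=
  MvPolynomial (CoefIdx d) k

/-- The polynomial ring `C = A[x₁,x₂,x₃,x₄]`. -/
abbrev Cring (k : Type*) [CommRing k] (d : Fin 2 → ℕ) : Type _ :=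
  MvPolynomial (Fin 4) (Aring k d)

/-- The generic homogeneous polynomial `f_i = Σ_{|α| = d i} U_{i,α} x^α` of degree `d i`. -/
noncomputable def genF (k : Type*) [CommRing k] (d : Fin 2 → ℕ) (i : Fin 2) : Cring k d :=
  ∑ α ∈ (Finset.finsuppAntidiag (Finset.univ : Finset (Fin 4)) (d i)).attach,
    monomial α.1 (X (⟨i, ⟨α.1, (Finset.mem_finsuppAntidiag'.mp α.2).1⟩⟩ : CoefIdx d))

/-- The 2-minors `J_{r,s} = ∂ᵣf₁·∂ₛf₂ − ∂ₛf₁·∂ᵣf₂` of the Jacobian matrix of `(f₁,f₂)`. -/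
noncomputable def Jmin (k : Type*) [CommRing k] (d : Fin 2 → ℕ) (r s : Fin 4) : Cring k d :=
  pderiv r (genF k d 0) * pderiv s (genF k d 1) -
    pderiv s (genF k d 0) * pderiv r (genF k d 1)

/-- The coefficient indeterminate `U_{i,j}` of the monomial `x₄^{d_i − 1}·x_j` in `f_i`,
for `j ∈ {1,2,3}` (indexed by `Fin 3`, embedded in `Fin 4` via `castSucc`). -/
noncomputable def Uvar (k : Type*) [CommRing k] (d : Fin 2 → ℕ) (hd : ∀ i, 0 < d i)
    (i : Fin 2) (j : Fin 3) : Aring k d :=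
  X (⟨i, ⟨Finsupp.single (Fin.castSucc j) 1 + Finsupp.single (3 : Fin 4) (d i - 1), by
    rw [Finsupp.sum_add_index' (fun a => rfl) (fun a b₁ b₂ => rfl),
      Finsupp.sum_single_index rfl, Finsupp.sum_single_index rfl]
    have := hd i; omega⟩⟩ : CoefIdx d)

/-- The 2-minor `𝕌_{r,s} = U_{1,r}·U_{2,s} − U_{1,s}·U_{2,r}` of the matrix `𝕌`. -/
noncomputable def Umin (k : Type*) [CommRing k] (d : Fin 2 → ℕ) (hd : ∀ i, 0 < d i)
    (r s : Fin 3) : Aring k d :=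
  Uvar k d hd 0 r * Uvar k d hd 1 s - Uvar k d hd 0 s * Uvar k d hd 1 r

/-! Regard `C_{x₄}` as a polynomial ring in the `U_{i,α}` over the ring `k[x₁,…,x₄]_{x₄}`. There
`∂ⱼfᵢ` is the linear form `∑_α ∂ⱼ(x^α) U_{i,α}`. For `j ≤ 3` the indeterminate `U_{i,j}` occurs in
it with the invertible coefficient `x₄^{dᵢ-1}`, while no other `U_{i',j'}` occurs. An affine change
of the six indeterminates `U_{i,j}` therefore turns every `∂ⱼfᵢ` into `U_{i,j}`, and hence every
minor `J_{r,s}` into `𝕌_{r,s}`. -/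

section AffineChange

variable {ι τ : Type*} {s : ι → τ}

section Semiring

variable {R : Type*} [CommSemiring R]

/-- The endomorphism of a polynomial ring substituting `F i` for the variable `s i` and fixing the
variables outside the range of `s`: the general shape of a change of the variables `s i`. If `s` is
not injective, the image of a variable hit more than once is an arbitrary one of the candidates. -/
noncomputable def substAlong (s : ι → τ) (F : ι → MvPolynomial τ R) :
    MvPolynomial τ R →ₐ[R] MvPolynomial τ R :=
  aeval (Function.extend s F X)

theorem substAlong_X_apply (hs : Function.Injective s) (F : ι → MvPolynomial τ R) (i : ι) :
    substAlong s F (X (s i)) = F i := by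
  rw [substAlong, aeval_X, hs.extend_apply]

theorem substAlong_X_of_notMem_range (F : ι → MvPolynomial τ R) {c : τ} (hc : c ∉ Set.range s) :
    substAlong s F (X c) = X c := by
  rw [substAlong, aeval_X, Function.extend_apply' _ _ _ hc]

theorem substAlong_eq_self_of_mem_supported (F : ι → MvPolynomial τ R) {p : MvPolynomial τ R}
    (hp : p ∈ supported R (Set.range s)ᶜ) : substAlong s F p = p := by
  refine AlgHom.adjoin_le_equalizer (substAlong s F) (AlgHom.id R _) ?_ hp
  rintro _ ⟨c, hc, rfl⟩
  exact substAlong_X_of_notMem_range F hc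

theorem substAlong_comp_eq_id (hs : Function.Injective s) {F G : ι → MvPolynomial τ R}
    (h : ∀ i, substAlong s F (G i) = X (s i)) :
    (substAlong s F).comp (substAlong s G) = AlgHom.id R _ := by
  ext1 c
  rw [AlgHom.comp_apply, AlgHom.id_apply]
  by_cases hc : c ∈ Set.range s
  · obtain ⟨i, rfl⟩ := hc
    rw [substAlong_X_apply hs, h]
  · simp only [substAlong_X_of_notMem_range _ hc]

end Semiring

variable {R : Type*} [CommRing R]

theorem exists_algEquiv_apply_eq_X_of_sub_mem_supported (hs : Function.Injective s) {u : ι → R}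
    (hu : ∀ i, IsUnit (u i)) {p : ι → MvPolynomial τ R}
    (hp : ∀ i, p i - C (u i) * X (s i) ∈ supported R (Set.range s)ᶜ) :
    ∃ e : MvPolynomial τ R ≃ₐ[R] MvPolynomial τ R, ∀ i, e (p i) = X (s i) := by
  choose v huv using fun i => (hu i).exists_right_inv
  have hC : ∀ i, (C (u i) * C (v i) : MvPolynomial τ R) = 1 := fun i => by
    rw [← C_mul, huv, C_1]
  set h : ι → MvPolynomial τ R := fun i => p i - C (u i) * X (s i) with h_def
  set q : ι → MvPolynomial τ R := fun i => C (v i) * (X (s i) - h i) with q_def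
  have hp_eq : ∀ i, p i = C (u i) * X (s i) + h i := fun i => by rw [h_def]; ring
  have subst_C : ∀ (F : ι → MvPolynomial τ R) (a : R), substAlong s F (C a) = C a :=
    fun F a => (substAlong s F).commutes a
  have subst_q_p : ∀ i, substAlong s q (p i) = X (s i) := fun i => by
    rw [hp_eq, map_add, map_mul, subst_C, substAlong_X_apply hs,
      substAlong_eq_self_of_mem_supported _ (hp i), q_def]
    linear_combination (X (s i) - h i) * hC i
  have subst_p_q : ∀ i, substAlong s p (q i) = X (s i) := fun i => by
    rw [q_def, map_mul, map_sub, subst_C, substAlong_X_apply hs,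
      substAlong_eq_self_of_mem_supported _ (hp i), hp_eq]
    linear_combination X (s i) * hC i
  exact ⟨AlgEquiv.ofAlgHom (substAlong s q) (substAlong s p)
    (substAlong_comp_eq_id hs subst_q_p) (substAlong_comp_eq_id hs subst_p_q), subst_q_p⟩

theorem sum_C_mul_X_sub_mem_supported {κ : Type*} {T : Finset κ} {a : κ → R} {v : κ → τ}
    {S : Set τ} {x₀ : κ} (hx₀ : x₀ ∈ T) (h : ∀ x ∈ T, x ≠ x₀ → v x ∈ S ∨ a x = 0) :
    ∑ x ∈ T, C (a x) * X (v x) - C (a x₀) * X (v x₀) ∈ supported R S := by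
  classical
  rw [← Finset.sum_erase_eq_sub hx₀]
  refine Subalgebra.sum_mem _ fun x hx => ?_
  obtain ⟨hne, hxT⟩ := Finset.mem_erase.mp hx
  obtain hv | ha := h x hxT hne
  · exact mul_mem ((supported R S).algebraMap_mem (a x)) (Algebra.subset_adjoin ⟨_, hv, rfl⟩)
  · rw [ha, C_0, zero_mul]
    exact zero_mem _

end AffineChange

section LocalizationSwap

theorem commAlgEquiv_map_C {k σ τ : Type*} [CommSemiring k] (p : MvPolynomial σ k) :
    commAlgEquiv k σ τ (map C p) = C p := by
  rw [← commAlgEquiv_C]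
  exact (commAlgEquiv k σ τ).apply_symm_apply (C p)

attribute [local instance] algebraMvPolynomial

variable (k σ τ : Type*) [CommRing k] (i : σ)

/-- The identification of `k[τ][σ]_{xᵢ}` with `k[σ]_{xᵢ}[τ]`, for a variable `xᵢ` with `i : σ`.
It makes the coefficient indeterminates the variables of a polynomial ring in which `xᵢ` is a unit
of the base ring. -/
noncomputable def awayXSwapEquiv :
    Localization.Away (X i : MvPolynomial σ (MvPolynomial τ k)) ≃+*
      MvPolynomial τ (Localization.Away (X i : MvPolynomial σ k)) :=
  IsLocalization.ringEquivOfRingEquiv (M := .powers (X i))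
    (T := (Submonoid.powers (X i : MvPolynomial σ k)).map C) _ _
    (commAlgEquiv k σ τ).toRingEquiv (by
      simp only [Submonoid.map_powers]
      exact congrArg Submonoid.powers (commAlgEquiv_X i))

variable {k σ τ}

theorem awayXSwapEquiv_algebraMap (p : MvPolynomial σ (MvPolynomial τ k)) :
    awayXSwapEquiv k σ τ i (algebraMap (MvPolynomial σ (MvPolynomial τ k)) _ p) =
      map (algebraMap (MvPolynomial σ k) _) (commAlgEquiv k σ τ p) :=
  IsLocalization.ringEquivOfRingEquiv_eq _ p

theorem awayXSwapEquiv_C_X (c : τ) :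
    awayXSwapEquiv k σ τ i (algebraMap (MvPolynomial σ (MvPolynomial τ k)) _ (C (X c))) = X c := by
  rw [awayXSwapEquiv_algebraMap, commAlgEquiv_C_X, map_X]

theorem awayXSwapEquiv_map_C (p : MvPolynomial σ k) :
    awayXSwapEquiv k σ τ i (algebraMap (MvPolynomial σ (MvPolynomial τ k)) _ (map C p)) =
      C (algebraMap (MvPolynomial σ k) _ p) := by
  rw [awayXSwapEquiv_algebraMap, commAlgEquiv_map_C, map_C]

end LocalizationSwap

theorem pderiv_monomial_single_add_single {R σ : Type*} [CommSemiring R] [DecidableEq σ]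
    {j m : σ} (hjm : j ≠ m) (l : σ) (n : ℕ) :
    pderiv j (monomial (Finsupp.single l 1 + Finsupp.single m n) (1 : R)) =
      if l = j then X m ^ n else 0 := by
  have h_monomial : monomial (Finsupp.single l 1 + Finsupp.single m n) (1 : R) = X l * X m ^ n := by
    rw [X_pow_eq_monomial, X, monomial_mul, one_mul]
  rw [h_monomial, pderiv_mul, pderiv_pow, pderiv_X_of_ne hjm.symm, mul_zero, mul_zero, add_zero]
  obtain rfl | hlj := eq_or_ne l j
  · rw [pderiv_X_self, one_mul, if_pos rfl]
  · rw [pderiv_X_of_ne hlj, zero_mul, if_neg hlj]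

section GenericForms

variable {k : Type*} [CommRing k] {d : Fin 2 → ℕ}

/-- The index of the coefficient `U_{i,α}` for an exponent vector `α` presented as a member of the
finite set over which `genF` sums. -/
def coefIdx (d : Fin 2 → ℕ) (i : Fin 2)
    (α : Finset.finsuppAntidiag (Finset.univ : Finset (Fin 4)) (d i)) : CoefIdx d :=
  ⟨i, ⟨α.1, (Finset.mem_finsuppAntidiag'.mp α.2).1⟩⟩

/-- The exponent vector of the monomial `x₄^{n-1} xⱼ`, where `j ∈ {1,2,3}`. -/
noncomputable def linExponent {n : ℕ} (hn : 0 < n) (j : Fin 3) :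
    Finset.finsuppAntidiag (Finset.univ : Finset (Fin 4)) n :=
  ⟨Finsupp.single j.castSucc 1 + Finsupp.single 3 (n - 1), by
    rw [Finset.mem_finsuppAntidiag]
    simp [Finset.sum_add_distrib, -Finsupp.single_tsub, Nat.add_sub_cancel' hn]⟩

theorem linExponent_injective {n : ℕ} (hn : 0 < n) :
    Function.Injective (linExponent hn) := fun j l h => by
  have h_single := add_right_cancel (Subtype.ext_iff.mp h)
  exact Fin.castSucc_injective 3 (Finsupp.single_left_injective one_ne_zero h_single)

theorem pderiv_monomial_linExponent {R : Type*} [CommSemiring R] {n : ℕ} (hn : 0 < n)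
    (j l : Fin 3) :
    pderiv j.castSucc (monomial (linExponent hn l).1 (1 : R)) =
      if l = j then X 3 ^ (n - 1) else 0 := by
  have h_ne : j.castSucc ≠ 3 := (Fin.castSucc_lt_last j).ne
  rw [linExponent, pderiv_monomial_single_add_single h_ne]
  simp only [Fin.castSucc_inj]

/-- The index of the coefficient `U_{i,j}` of `x₄^{dᵢ-1} xⱼ` in `fᵢ`, where `j ∈ {1,2,3}`. -/
noncomputable def linCoefIdx (hd : ∀ i, 0 < d i) (p : Fin 2 × Fin 3) : CoefIdx d :=
  coefIdx d p.1 (linExponent (hd p.1) p.2)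

theorem X_linCoefIdx (hd : ∀ i, 0 < d i) (i : Fin 2) (j : Fin 3) :
    X (linCoefIdx hd (i, j)) = Uvar k d hd i j := rfl

theorem coefIdx_injective (i : Fin 2) : Function.Injective (coefIdx d i) := fun _ _ h =>
  Subtype.ext (congrArg (fun c : CoefIdx d => c.2.1) h)

theorem linCoefIdx_injective (hd : ∀ i, 0 < d i) : Function.Injective (linCoefIdx hd) := by
  rintro ⟨i, j⟩ ⟨i', l⟩ h
  obtain rfl : i = i' := congrArg Sigma.fst h
  exact congrArg _ (linExponent_injective (hd i) (coefIdx_injective i h))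

theorem genF_eq_sum_C_mul_map (i : Fin 2) :
    genF k d i = ∑ α ∈ (Finset.finsuppAntidiag (Finset.univ : Finset (Fin 4)) (d i)).attach,
      C (X (coefIdx d i α)) * map C (monomial α.1 1) := by
  refine Finset.sum_congr rfl fun α _ => ?_
  rw [map_monomial, C_1, C_mul_monomial, mul_one, coefIdx]

theorem awayXSwapEquiv_pderiv_genF (i : Fin 2) (j : Fin 4) :
    awayXSwapEquiv k (Fin 4) (CoefIdx d) 3
        (algebraMap (Cring k d) _ (pderiv j (genF k d i))) =
      ∑ α ∈ (Finset.finsuppAntidiag (Finset.univ : Finset (Fin 4)) (d i)).attach,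
        C (algebraMap (MvPolynomial (Fin 4) k) _ (pderiv j (monomial α.1 1))) *
          X (coefIdx d i α) := by
  simp only [genF_eq_sum_C_mul_map, map_sum, pderiv_C_mul, pderiv_map, map_mul,
    awayXSwapEquiv_C_X, awayXSwapEquiv_map_C]
  exact Finset.sum_congr rfl fun α _ => mul_comm _ _

theorem awayXSwapEquiv_pderiv_genF_sub_mem_supported (hd : ∀ i, 0 < d i) (i : Fin 2) (j : Fin 3) :
    awayXSwapEquiv k (Fin 4) (CoefIdx d) 3
          (algebraMap (Cring k d) _ (pderiv j.castSucc (genF k d i))) -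
        C (algebraMap (MvPolynomial (Fin 4) k) _ (X 3 ^ (d i - 1))) * X (linCoefIdx hd (i, j)) ∈
      supported _ (Set.range (linCoefIdx hd))ᶜ := by
  have h_coeff : (X 3 ^ (d i - 1) : MvPolynomial (Fin 4) k) =
      pderiv j.castSucc (monomial (linExponent (hd i) j).1 1) := by
    rw [pderiv_monomial_linExponent, if_pos rfl]
  rw [awayXSwapEquiv_pderiv_genF, h_coeff]
  refine sum_C_mul_X_sub_mem_supported (Finset.mem_attach _ _) fun α _ hα => ?_
  refine or_iff_not_imp_left.mpr fun h_lin => ?_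
  obtain ⟨⟨i', l⟩, h⟩ := not_not.mp h_lin
  obtain rfl : i' = i := congrArg Sigma.fst h
  obtain rfl : linExponent (hd i') l = α := coefIdx_injective i' h
  rw [pderiv_monomial_linExponent, if_neg fun hlj => hα (congrArg _ hlj), map_zero]

variable (k) in
theorem exists_ringEquiv_pderiv_genF_eq_Uvar (hd : ∀ i, 0 < d i) :
    ∃ e : Localization.Away (X 3 : Cring k d) ≃+* Localization.Away (X 3 : Cring k d),
      ∀ (i : Fin 2) (j : Fin 3), e (algebraMap (Cring k d) _ (pderiv j.castSucc (genF k d i))) =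
        algebraMap (Cring k d) _ (C (Uvar k d hd i j)) := by
  have isUnit_pow : ∀ p : Fin 2 × Fin 3, IsUnit (algebraMap (MvPolynomial (Fin 4) k)
      (Localization.Away (X 3 : MvPolynomial (Fin 4) k)) (X 3 ^ (d p.1 - 1))) := fun p => by
    rw [map_pow]
    exact (IsLocalization.Away.algebraMap_isUnit _).pow _
  obtain ⟨φ, hφ⟩ := exists_algEquiv_apply_eq_X_of_sub_mem_supported
    (linCoefIdx_injective hd) isUnit_pow fun p =>
      awayXSwapEquiv_pderiv_genF_sub_mem_supported hd p.1 p.2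
  let θ := awayXSwapEquiv k (Fin 4) (CoefIdx d) 3
  refine ⟨(θ.trans φ.toRingEquiv).trans θ.symm, fun i j => ?_⟩
  rw [← X_linCoefIdx, ← θ.injective.eq_iff]
  simpa [θ, awayXSwapEquiv_C_X] using hφ (i, j)

variable (k d) in
theorem setOf_Jmin_eq_image :
    {p | ∃ r s : Fin 4, r < s ∧ r ≠ 3 ∧ s ≠ 3 ∧ p = Jmin k d r s} =
      (fun q : Fin 3 × Fin 3 => Jmin k d q.1.castSucc q.2.castSucc) '' {q | q.1 < q.2} := by
  ext p
  constructor
  · rintro ⟨r, s, hrs, hr, hs, rfl⟩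
    obtain ⟨r, rfl⟩ := Fin.exists_castSucc_eq.mpr hr
    obtain ⟨s, rfl⟩ := Fin.exists_castSucc_eq.mpr hs
    exact ⟨(r, s), hrs, rfl⟩
  · rintro ⟨⟨r, s⟩, hrs, rfl⟩
    exact ⟨_, _, hrs, (Fin.castSucc_lt_last r).ne, (Fin.castSucc_lt_last s).ne, rfl⟩

variable (k) in
theorem setOf_C_Umin_eq_image (hd : ∀ i, 0 < d i) :
    {p | ∃ r s : Fin 3, r < s ∧ p = C (Umin k d hd r s)} =
      (fun q : Fin 3 × Fin 3 => (C (Umin k d hd q.1 q.2) : Cring k d)) '' {q | q.1 < q.2} := by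
  ext p
  simp only [Set.mem_ofPred_eq, Set.mem_image, Prod.exists, eq_comm]

end GenericForms

/-- **Lemma.** There is a ring isomorphism between
`C_{x₄}/(J_{1,2}, J_{1,3}, J_{2,3})·C_{x₄}` and `C_{x₄}/(𝕌_{1,2}, 𝕌_{1,3}, 𝕌_{2,3})·C_{x₄}`,
where the `J_{r,s}` are the Jacobian minors not involving `∂₄` and the `𝕌_{r,s}` are the
2-minors of the matrix of coefficients `U_{i,j}` of the monomials `x₄^{d_i−1}·x_j`. -/
theorem quotient_Jmin_ringEquiv_quotient_Umin (k : Type*) [CommRing k] (d : Fin 2 → ℕ)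
    (hd : ∀ i, 0 < d i) :
    Nonempty
      ((Localization.Away (X 3 : Cring k d) ⧸
          Ideal.span ((algebraMap (Cring k d) (Localization.Away (X 3 : Cring k d))) ''
            {p | ∃ r s : Fin 4, r < s ∧ r ≠ 3 ∧ s ≠ 3 ∧ p = Jmin k d r s})) ≃+*
        (Localization.Away (X 3 : Cring k d) ⧸
          Ideal.span ((algebraMap (Cring k d) (Localization.Away (X 3 : Cring k d))) ''
            {p | ∃ r s : Fin 3, r < s ∧ p = C (Umin k d hd r s)}))) := by
  obtain ⟨e, he⟩ := exists_ringEquiv_pderiv_genF_eq_Uvar k hd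
  have he_minor : ∀ r s : Fin 3, e (algebraMap (Cring k d) _ (Jmin k d r.castSucc s.castSucc)) =
      algebraMap (Cring k d) _ (C (Umin k d hd r s)) := fun r s => by
    simp only [Jmin, Umin, map_sub, map_mul, he]
  refine ⟨Ideal.quotientEquiv _ _ e ?_⟩
  rw [Ideal.map_span, setOf_Jmin_eq_image, setOf_C_Umin_eq_image]
  simp only [Set.image_image, RingHom.coe_coe, he_minor]
end

section
/- Assume k is an integral domain. Then for all i ≠ j in {1,2,3,4}, the image of x_i in the localization B_{x_j} is not a zero divisor; consequently the canonical map B_{x_j} → B_{x_i x_j} is injective. -/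
set_option maxSynthPendingDepth 3

open MvPolynomial

/-- The ideal `𝒟 = (f₁, f₂) + (J_{r,s} : r < s) ⊂ C`. -/
noncomputable def Dideal (k : Type*) [CommRing k] (d : Fin 2 → ℕ) : Ideal (Cring k d) :=
  Ideal.span ({genF k d 0, genF k d 1} ∪ {p | ∃ r s : Fin 4, r < s ∧ p = Jmin k d r s})

/-! The shear `x_i ↦ x_i + t x_j` acts on pairs of forms together with a point, and it preserves
the locus where both forms and the `2`-minors of their Jacobian matrix vanish at the point. As `B`
is the coordinate ring of that locus, this gives a ring homomorphism `T : B → B[t]` which reduces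
to the identity at `t = 0` and satisfies `T x_j = x_j`, `T x_i = x_i + t x_j`; it extends to
`B_{x_j}`. There `x_i + t x_j` is a polynomial in `t` with unit leading coefficient, so
`x_i b = 0` forces `T b = 0`, and setting `t = 0` gives `b = 0`. -/

section NonZeroDivisors

variable {R : Type*} [CommRing R]

theorem mem_nonZeroDivisors_of_translation (T : R →+* Polynomial R)
    (hT : Polynomial.constantCoeff.comp T = RingHom.id R) {x u : R} (hu : u ∈ nonZeroDivisors R)
    (hx : T x = Polynomial.C x + Polynomial.X * Polynomial.C u) : x ∈ nonZeroDivisors R := by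
  have hTx : T x ∈ nonZeroDivisors (Polynomial R) :=
    Polynomial.mem_nonzeroDivisors_of_coeff_mem 1 (by simpa [hx] using hu)
  refine mem_nonZeroDivisors_iff_right.mpr fun b hb => ?_
  have hTb : T b = 0 :=
    mem_nonZeroDivisors_iff_right.mp hTx (T b) (by rw [← map_mul, hb, map_zero])
  simpa [hTb] using (RingHom.congr_fun hT b).symm

theorem algebraMap_mem_nonZeroDivisors_of_translation (S : Type*) [CommRing S] [Algebra R S]
    (T : R →+* Polynomial R) (hT : Polynomial.constantCoeff.comp T = RingHom.id R) {x u : R}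
    [IsLocalization.Away u S] (hu : T u = Polynomial.C u)
    (hx : T x = Polynomial.C x + Polynomial.X * Polynomial.C u) :
    algebraMap R S x ∈ nonZeroDivisors S := by
  have unit_u : IsUnit (algebraMap R S u) := IsLocalization.Away.algebraMap_isUnit u
  let toPoly : R →+* Polynomial S := (Polynomial.mapRingHom (algebraMap R S)).comp T
  have unit_toPoly : IsUnit (toPoly u) := by simpa [toPoly, hu] using unit_u
  let TS : S →+* Polynomial S := IsLocalization.Away.lift u unit_toPoly
  have TS_algebraMap (a : R) : TS (algebraMap R S a) = toPoly a :=
    IsLocalization.Away.lift_eq u unit_toPoly a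
  refine mem_nonZeroDivisors_of_translation TS ?_ unit_u.mem_nonZeroDivisors ?_
  · refine IsLocalization.ringHom_ext (Submonoid.powers u) (RingHom.ext fun a => ?_)
    have hTa : (T a).coeff 0 = a := RingHom.congr_fun hT a
    simp [TS_algebraMap, toPoly, hTa]
  · simp [TS_algebraMap, toPoly, hx]

end NonZeroDivisors

theorem derivation_aeval_eq_sum {σ R A M : Type*} [Fintype σ] [CommSemiring R] [CommSemiring A]
    [Algebra R A] [AddCommMonoid M] [Module A M] [Module R M]
    (D : Derivation R A M) (g : σ → A) (p : MvPolynomial σ R) :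
    D (aeval g p) = ∑ s, aeval g (pderiv s p) • D (g s) := by
  classical
  induction p using MvPolynomial.induction_on with
  | C a => simp
  | add p q hp hq => simp [hp, hq, add_smul, Finset.sum_add_distrib]
  | mul_X p s hp =>
    simp [hp, add_smul, mul_smul, Finset.sum_add_distrib, Finset.smul_sum, Pi.single_apply,
      apply_ite (aeval g), ite_smul]

theorem eval_map_comp_C {σ A R : Type*} [CommSemiring A] [CommSemiring R]
    (ψ : MvPolynomial σ A →+* R) (p : MvPolynomial σ A) :
    eval (ψ ∘ X) (map (ψ.comp C) p) = ψ p := by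
  rw [eval_map, ← coe_eval₂Hom]
  exact RingHom.congr_fun (ringHom_ext (by simp) (by simp)) p

section Shear

variable {σ R S : Type*} [DecidableEq σ] [CommSemiring R] [CommSemiring S]
  (i j : σ) (t : R) (x : σ → R)

/-- The shear adding `t` times the `j`-th coordinate to the `i`-th one. It is used both on points
and, applied to the family of indeterminates, as a linear substitution in polynomials. -/
def shear : σ → R :=
  x + Pi.single i (t * x j)

theorem shear_apply (r : σ) : shear i j t x r = x r + if r = i then t * x j else 0 := by
  simp [shear, Pi.single_apply]

theorem shear_zero : shear i j 0 x = x := by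
  simp [shear]

theorem map_shear (h : R →+* S) (r : σ) : h (shear i j t x r) = shear i j (h t) (h ∘ x) r := by
  simp [shear_apply, apply_ite h]

theorem map_bind₁_shear (h : R →+* S) (p : MvPolynomial σ R) :
    map h (bind₁ (shear i j (C t) X) p) = bind₁ (shear i j (C (h t)) X) (map h p) := by
  rw [map_bind₁]
  congr 2
  funext r
  simp [shear_apply, apply_ite (map h)]

theorem isHomogeneous_bind₁_shear {p : MvPolynomial σ R} {n : ℕ} (hp : p.IsHomogeneous n) :
    (bind₁ (shear i j (C t) X) p).IsHomogeneous n := by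
  have linear (r : σ) : (shear i j (C t) X r : MvPolynomial σ R).IsHomogeneous 1 := by
    rw [shear_apply]
    split_ifs
    · exact (isHomogeneous_X R r).add (isHomogeneous_C_mul_X t j)
    · exact (isHomogeneous_X R r).add (isHomogeneous_zero _ _ _)
  simpa using hp.aeval _ linear

theorem pderiv_bind₁_shear [Finite σ] (r : σ) (p : MvPolynomial σ R) :
    pderiv r (bind₁ (shear i j (C t) X) p) = bind₁ (shear i j (C t) X)
      (pderiv r p + C (if r = j then t else 0) * pderiv i p) := by
  have := Fintype.ofFinite σ
  have pderiv_shear (s : σ) : pderiv r (shear i j (C t) X s : MvPolynomial σ R) =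
      (if s = r then 1 else 0) + if s = i then C (if r = j then t else 0) else 0 := by
    rw [shear_apply]
    split_ifs <;> simp_all [pderiv_X, Pi.single_apply, eq_comm]
  rw [bind₁, derivation_aeval_eq_sum]
  simp [pderiv_shear, mul_add, Finset.sum_add_distrib, mul_comm (C _)]

end Shear

theorem eval_shear_bind₁_shear_neg {σ R : Type*} [DecidableEq σ] [CommRing R] {i j : σ}
    (hij : i ≠ j) (t : R) (x : σ → R) (p : MvPolynomial σ R) :
    eval (shear i j t x) (bind₁ (shear i j (C (-t)) X) p) = eval x p := by
  have substitution_at_point (r : σ) : eval (shear i j t x) (shear i j (C (-t)) X r) = x r := by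
    by_cases hr : r = i <;> simp [shear_apply, hr, hij.symm]
  rw [eval, eval₂Hom_bind₁]
  exact congrArg (eval · p) (funext substitution_at_point)

section GenericForms

variable {k : Type*} [CommRing k] {d : Fin 2 → ℕ} {R S : Type*} [CommRing R] [CommRing S]

theorem isHomogeneous_genF (a : Fin 2) : (genF k d a).IsHomogeneous (d a) :=
  IsHomogeneous.sum _ _ _ fun α _ => isHomogeneous_monomial _ <| by
    simpa [Finsupp.degree_eq_sum] using (Finset.mem_finsuppAntidiag.mp α.2).1

theorem coeff_genF (c : CoefIdx d) : coeff c.2.1 (genF k d c.1) = X c := by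
  obtain ⟨a, α, hα⟩ := c
  have mem : α ∈ Finset.finsuppAntidiag (Finset.univ : Finset (Fin 4)) (d a) :=
    Finset.mem_finsuppAntidiag'.mpr ⟨hα, Finset.subset_univ _⟩
  rw [genF, coeff_sum, Finset.sum_eq_single ⟨α, mem⟩]
  · simp
  · intro β _ hβ
    simpa [coeff_monomial] using fun h => absurd (Subtype.ext h) hβ
  · simp

/-- The specialization of the universal coefficients to those of a pair `F` of polynomials. -/
noncomputable def specializeCoeff (φ : k →+* R) (F : Fin 2 → MvPolynomial (Fin 4) R) :
    Aring k d →+* R :=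
  eval₂Hom φ fun c => coeff c.2.1 (F c.1)

/-- The specialization of the generic pair of forms to a pair `F`, followed by evaluation at the
point `y`. -/
noncomputable def specialize (φ : k →+* R) (F : Fin 2 → MvPolynomial (Fin 4) R) (y : Fin 4 → R) :
    Cring k d →+* R :=
  eval₂Hom (specializeCoeff φ F) y

theorem map_specializeCoeff_genF (φ : k →+* R) {F : Fin 2 → MvPolynomial (Fin 4) R}
    (hF : ∀ a, (F a).IsHomogeneous (d a)) (a : Fin 2) :
    map (specializeCoeff φ F) (genF k d a) = F a := by
  ext α
  rw [coeff_map]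
  by_cases hα : α.degree = d a
  · rw [coeff_genF (⟨a, α, hα⟩ : CoefIdx d)]
    exact eval₂_X ..
  · rw [(isHomogeneous_genF a).coeff_eq_zero hα, (hF a).coeff_eq_zero hα, map_zero]

theorem specialize_genF (φ : k →+* R) {F : Fin 2 → MvPolynomial (Fin 4) R}
    (hF : ∀ a, (F a).IsHomogeneous (d a)) (y : Fin 4 → R) (a : Fin 2) :
    specialize φ F y (genF k d a) = eval y (F a) := by
  rw [specialize, coe_eval₂Hom, eval₂_eq_eval_map, map_specializeCoeff_genF φ hF]

theorem specialize_pderiv_genF (φ : k →+* R) {F : Fin 2 → MvPolynomial (Fin 4) R}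
    (hF : ∀ a, (F a).IsHomogeneous (d a)) (y : Fin 4 → R) (a : Fin 2) (r : Fin 4) :
    specialize φ F y (pderiv r (genF k d a)) = eval y (pderiv r (F a)) := by
  rw [specialize, coe_eval₂Hom, eval₂_eq_eval_map, ← pderiv_map, map_specializeCoeff_genF φ hF]

theorem comp_specialize (h : R →+* S) (φ : k →+* R) (F : Fin 2 → MvPolynomial (Fin 4) R)
    (y : Fin 4 → R) :
    h.comp (specialize φ F y : Cring k d →+* R) =
      specialize (h.comp φ) (fun a => map h (F a)) (h ∘ y) := by
  ext <;> simp [specialize, specializeCoeff, coeff_map]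

theorem specialize_map_genF (ψ : Cring k d →+* R) :
    specialize (ψ.comp (C.comp C)) (fun a => map (ψ.comp C) (genF k d a)) (ψ ∘ X) = ψ := by
  ext <;> simp [specialize, specializeCoeff, coeff_map, coeff_genF]

/-- The homomorphism obtained from `ψ` by shearing both its point, by `t`, and its pair of forms,
by `-t`, so that the values of the forms at the point do not change. -/
noncomputable def shearHom (ψ : Cring k d →+* R) (i j : Fin 4) (t : R) : Cring k d →+* R :=
  specialize (ψ.comp (C.comp C))
    (fun a => bind₁ (shear i j (C (-t)) X) (map (ψ.comp C) (genF k d a)))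
    (shear i j t (ψ ∘ X))

variable (ψ : Cring k d →+* R) {i j : Fin 4} (t : R)

theorem shearHom_X (r : Fin 4) : shearHom ψ i j t (X r) = shear i j t (ψ ∘ X) r := by
  simp [shearHom, specialize]

theorem comp_shearHom (h : R →+* S) :
    h.comp (shearHom ψ i j t) = shearHom (h.comp ψ) i j (h t) := by
  rw [shearHom, comp_specialize, shearHom]
  congr 1
  · funext a
    rw [map_bind₁_shear, map_neg, map_map]
    rfl
  · exact funext fun r => map_shear ..

theorem shearHom_zero : shearHom ψ i j 0 = ψ := by
  conv_rhs => rw [← specialize_map_genF ψ]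
  simp [shearHom, shear_zero]

theorem isHomogeneous_shear_map_genF (a : Fin 2) :
    (bind₁ (shear i j (C t) X) (map (ψ.comp C) (genF k d a))).IsHomogeneous (d a) :=
  isHomogeneous_bind₁_shear i j t ((isHomogeneous_genF a).map _)

theorem shearHom_genF (hij : i ≠ j) (a : Fin 2) :
    shearHom ψ i j t (genF k d a) = ψ (genF k d a) := by
  rw [shearHom, specialize_genF _ (isHomogeneous_shear_map_genF ψ (-t)),
    eval_shear_bind₁_shear_neg hij, eval_map_comp_C]

theorem shearHom_pderiv_genF (hij : i ≠ j) (a : Fin 2) (r : Fin 4) :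
    shearHom ψ i j t (pderiv r (genF k d a)) =
      ψ (pderiv r (genF k d a)) - (if r = j then t else 0) * ψ (pderiv i (genF k d a)) := by
  rw [shearHom, specialize_pderiv_genF _ (isHomogeneous_shear_map_genF ψ (-t)),
    pderiv_bind₁_shear, eval_shear_bind₁_shear_neg hij]
  simp only [pderiv_map, map_add, map_mul, eval_C, eval_map_comp_C]
  split_ifs <;> ring

theorem shearHom_Jmin (hij : i ≠ j) (r s : Fin 4) :
    shearHom ψ i j t (Jmin k d r s) = ψ (Jmin k d r s) -
      (if s = j then t else 0) * ψ (Jmin k d r i) -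
      (if r = j then t else 0) * ψ (Jmin k d i s) := by
  simp only [Jmin, map_sub, map_mul, shearHom_pderiv_genF ψ t hij]
  ring

theorem genF_mem_Dideal (a : Fin 2) : genF k d a ∈ Dideal k d :=
  Ideal.subset_span <| Or.inl <| by fin_cases a <;> simp

theorem Jmin_mem_Dideal (r s : Fin 4) : Jmin k d r s ∈ Dideal k d := by
  obtain hrs | rfl | hsr := lt_trichotomy r s
  · exact Ideal.subset_span (Or.inr ⟨r, s, hrs, rfl⟩)
  · simp [Jmin]
  · have antisymm : Jmin k d r s = -Jmin k d s r := by
      simp only [Jmin]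
      ring
    rw [antisymm]
    exact neg_mem (Ideal.subset_span (Or.inr ⟨s, r, hsr, rfl⟩))

variable {ψ} in
theorem shearHom_eq_zero_of_mem_Dideal (hij : i ≠ j) (hψ : ∀ p ∈ Dideal k d, ψ p = 0) :
    ∀ p ∈ Dideal k d, shearHom ψ i j t p = 0 := by
  have hgenF (a : Fin 2) : ψ (genF k d a) = 0 := hψ _ (genF_mem_Dideal a)
  have hJmin (r s : Fin 4) : ψ (Jmin k d r s) = 0 := hψ _ (Jmin_mem_Dideal r s)
  suffices Dideal k d ≤ RingHom.ker (shearHom ψ i j t) from fun p hp => this hp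
  rw [Dideal, Ideal.span_le]
  rintro p ((rfl | rfl) | ⟨r, s, -, rfl⟩) <;> rw [SetLike.mem_coe, RingHom.mem_ker]
  · rw [shearHom_genF ψ t hij, hgenF]
  · rw [shearHom_genF ψ t hij, hgenF]
  · simp [shearHom_Jmin ψ t hij, hJmin]

/-- The homomorphism `B → B[t]` induced by the shear `x_i ↦ x_i + t x_j`. -/
noncomputable def shearQuotient (k : Type*) [CommRing k] (d : Fin 2 → ℕ) (hij : i ≠ j) :
    Cring k d ⧸ Dideal k d →+* Polynomial (Cring k d ⧸ Dideal k d) :=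
  Ideal.Quotient.lift (Dideal k d)
    (shearHom (Polynomial.C.comp (Ideal.Quotient.mk (Dideal k d))) i j Polynomial.X)
    (shearHom_eq_zero_of_mem_Dideal _ hij fun p hp => by
      simp [Ideal.Quotient.eq_zero_iff_mem.mpr hp])

theorem constantCoeff_comp_shearQuotient (hij : i ≠ j) :
    Polynomial.constantCoeff.comp (shearQuotient k d hij) = RingHom.id _ := by
  apply Ideal.Quotient.ringHom_ext
  rw [RingHom.comp_assoc, shearQuotient, Ideal.Quotient.lift_comp_mk, comp_shearHom,
    Polynomial.constantCoeff_apply, Polynomial.coeff_X_zero, shearHom_zero]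
  ext <;> simp

theorem shearQuotient_X (hij : i ≠ j) (r : Fin 4) :
    shearQuotient k d hij (Ideal.Quotient.mk (Dideal k d) (X r)) =
      Polynomial.C (Ideal.Quotient.mk (Dideal k d) (X r)) +
        if r = i then Polynomial.X * Polynomial.C (Ideal.Quotient.mk (Dideal k d) (X j))
        else 0 := by
  simp [shearQuotient, shearHom_X, shear_apply]

end GenericForms

theorem X_nonZeroDivisor_in_B_localization_general (k : Type*) [CommRing k] (d : Fin 2 → ℕ)
    (i j : Fin 4) (hij : i ≠ j) :
    (algebraMap (Cring k d ⧸ Dideal k d)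
        (Localization.Away (Ideal.Quotient.mk (Dideal k d) (X j : Cring k d)))
        (Ideal.Quotient.mk (Dideal k d) (X i : Cring k d))) ∈
      nonZeroDivisors
        (Localization.Away (Ideal.Quotient.mk (Dideal k d) (X j : Cring k d))) ∧
    Function.Injective
      (algebraMap
        (Localization.Away (Ideal.Quotient.mk (Dideal k d) (X j : Cring k d)))
        (Localization.Away
          (algebraMap (Cring k d ⧸ Dideal k d)
            (Localization.Away (Ideal.Quotient.mk (Dideal k d) (X j : Cring k d)))
            (Ideal.Quotient.mk (Dideal k d) (X i : Cring k d))))) := by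
  have nonZeroDivisor := algebraMap_mem_nonZeroDivisors_of_translation
    (Localization.Away (Ideal.Quotient.mk (Dideal k d) (X j : Cring k d)))
    (shearQuotient k d hij) (constantCoeff_comp_shearQuotient hij)
    (by simpa [hij.symm] using shearQuotient_X hij j) (by simpa using shearQuotient_X hij i)
  exact ⟨nonZeroDivisor, IsLocalization.injective _ (Submonoid.powers_le.mpr nonZeroDivisor)⟩

/-- **Lemma.** If `k` is a domain then for all `i ≠ j`, the image of `x_i` in the
localization `B_{x_j}` of `B = C/𝒟` is a nonzerodivisor; consequently the canonical map
`B_{x_j} → B_{x_i x_j}` (localizing `B_{x_j}` further at the image of `x_i`) is injective. -/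
theorem X_nonZeroDivisor_in_B_localization (k : Type*) [CommRing k] [IsDomain k]
    (d : Fin 2 → ℕ) (hd : ∀ i, 0 < d i) (i j : Fin 4) (hij : i ≠ j) :
    (algebraMap (Cring k d ⧸ Dideal k d)
        (Localization.Away (Ideal.Quotient.mk (Dideal k d) (X j : Cring k d)))
        (Ideal.Quotient.mk (Dideal k d) (X i : Cring k d))) ∈
      nonZeroDivisors
        (Localization.Away (Ideal.Quotient.mk (Dideal k d) (X j : Cring k d))) ∧
    Function.Injective
      (algebraMap
        (Localization.Away (Ideal.Quotient.mk (Dideal k d) (X j : Cring k d)))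
        (Localization.Away
          (algebraMap (Cring k d ⧸ Dideal k d)
            (Localization.Away (Ideal.Quotient.mk (Dideal k d) (X j : Cring k d)))
            (Ideal.Quotient.mk (Dideal k d) (X i : Cring k d))))) := by
  exact X_nonZeroDivisor_in_B_localization_general k d i j hij
end
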